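/- Let G be a finite partitionable group. Then ρ(G) ≤ |G| − 1, and equality ρ(G) = |G| − 1 holds if and only if G is isomorphic to C₂ × C₂, the Klein four-group. -/

import Mathlib

/-!
After discarding the trivial subgroup from a partition, choosing a non-identity element in each
member is injective, because distinct members meet trivially; hence `ρ(G) ≤ |G| - 1`. If
`ρ(G) = |G| - 1`, the choice is also onto the non-identity elements, so every member has order two
and `G` has exponent two. For `a ≠ 1` and `b ∉ {1, a}` the subgroup `{1, a, b, ab}` must then be
all of `G`: otherwise it forms, together with the subgroups of order two outside it, a
partition with at most `|G| - 3` members. Conversely, in a group of order four a proper subgroup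
has at most one non-identity element, so even a cover needs at least three members.
-/

open Pointwise

/-- A cover of a group `G`: a finite family of proper subgroups whose union is all of `G`. -/
def IsCover {G : Type*} [Group G] (P : Finset (Subgroup G)) : Prop :=
  (∀ H ∈ P, H ≠ ⊤) ∧ ∀ g : G, ∃ H ∈ P, g ∈ H

/-- A partition of a group `G`: a cover in which any two distinct members intersect trivially. -/
def IsPartitionOf {G : Type*} [Group G] (P : Finset (Subgroup G)) : Prop :=
  IsCover P ∧ ∀ H ∈ P, ∀ K ∈ P, H ≠ K → H ⊓ K = ⊥

/-- `σ(G)`: the minimal cardinality of a cover of `G`. -/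
noncomputable def sigmaG (G : Type*) [Group G] : ℕ :=
  sInf {n | ∃ P : Finset (Subgroup G), IsCover P ∧ P.card = n}

/-- `ρ(G)`: the minimal cardinality of a partition of `G`. -/
noncomputable def rhoG (G : Type*) [Group G] : ℕ :=
  sInf {n | ∃ P : Finset (Subgroup G), IsPartitionOf P ∧ P.card = n}

/-- A group is partitionable if it admits a partition. -/
def Partitionable (G : Type*) [Group G] : Prop :=
  ∃ P : Finset (Subgroup G), IsPartitionOf P

/-- A group with a cover is not cyclic. -/
lemma IsCover.zpowers_ne_top {G : Type*} [Group G] {P : Finset (Subgroup G)} (hP : IsCover P)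
    (a : G) : Subgroup.zpowers a ≠ ⊤ := by
  intro h
  obtain ⟨H, hH, haH⟩ := hP.2 a
  exact hP.1 H hH (top_le_iff.1 (h ▸ (Subgroup.zpowers_le.2 haH)))

lemma IsCover.exists_ne_one {G : Type*} [Group G] {P : Finset (Subgroup G)} (hP : IsCover P) :
    ∃ a : G, a ≠ 1 := by
  by_contra! h
  exact hP.zpowers_ne_top 1 (by ext x; simp [h x])

open Classical in
lemma IsPartitionOf.erase_bot {G : Type*} [Group G] {P : Finset (Subgroup G)}
    (hP : IsPartitionOf P) : IsPartitionOf (P.erase ⊥) := by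
  obtain ⟨a, ha⟩ := hP.1.exists_ne_one
  refine ⟨⟨fun H hH => hP.1.1 H (Finset.mem_of_mem_erase hH), fun g => ?_⟩,
    fun H hH K hK => hP.2 H (Finset.mem_of_mem_erase hH) K (Finset.mem_of_mem_erase hK)⟩
  have key : ∀ g : G, g ≠ 1 → ∃ H ∈ P.erase ⊥, g ∈ H := by
    intro g hg
    obtain ⟨H, hH, hgH⟩ := hP.1.2 g
    refine ⟨H, Finset.mem_erase.2 ⟨?_, hH⟩, hgH⟩
    rintro rfl
    exact hg (Subgroup.mem_bot.1 hgH)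
  by_cases hg : g = 1
  · obtain ⟨H, hH, -⟩ := key a ha
    exact ⟨H, hH, hg ▸ H.one_mem⟩
  · exact key g hg

lemma IsPartitionOf.eq_of_mem {G : Type*} [Group G] {P : Finset (Subgroup G)}
    (hP : IsPartitionOf P) {H K : Subgroup G} (hH : H ∈ P) (hK : K ∈ P) {g : G} (hg : g ≠ 1)
    (hgH : g ∈ H) (hgK : g ∈ K) : H = K := by
  by_contra hne
  have : g ∈ H ⊓ K := ⟨hgH, hgK⟩
  rw [hP.2 H hH K hK hne] at this
  exact hg (Subgroup.mem_bot.1 this)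

lemma rhoG_le {G : Type*} [Group G] {P : Finset (Subgroup G)} (hP : IsPartitionOf P) :
    rhoG G ≤ P.card :=
  Nat.sInf_le ⟨P, hP, rfl⟩

open Classical in
/-- A partition into nontrivial subgroups has at most `|G| - 1` members, and if that bound is
attained then all members have order two, so that `G` has exponent two. -/
lemma IsPartitionOf.card_le {G : Type*} [Group G] [Fintype G] {P : Finset (Subgroup G)}
    (hP : IsPartitionOf P) (hbot : ⊥ ∉ P) :
    P.card ≤ Fintype.card G - 1 ∧
      (P.card = Fintype.card G - 1 → ∀ g : G, g * g = 1) := by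
  have hex : ∀ H : Subgroup G, ∃ g : G, H ∈ P → g ∈ H ∧ g ≠ 1 := by
    intro H
    by_cases hH : H ∈ P
    · have : H ≠ ⊥ := by rintro rfl; exact hbot hH
      obtain ⟨g, hg, hg1⟩ := H.bot_or_exists_ne_one.resolve_left this
      exact ⟨g, fun _ => ⟨hg, hg1⟩⟩
    · exact ⟨1, fun h => absurd h hH⟩
  choose c hc using hex
  have hcard : (Finset.univ.erase (1 : G)).card = Fintype.card G - 1 := by
    rw [Finset.card_erase_of_mem (Finset.mem_univ _), Finset.card_univ]
  have hinj : Set.InjOn c P := by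
    intro H hH K hK h
    exact hP.eq_of_mem hH hK (hc H hH).2 (hc H hH).1 (h ▸ (hc K hK).1)
  have hsub : P.image c ⊆ Finset.univ.erase (1 : G) := by
    intro g hg
    obtain ⟨H, hH, rfl⟩ := Finset.mem_image.1 hg
    simpa using (hc H hH).2
  have him : (P.image c).card = P.card := Finset.card_image_of_injOn hinj
  refine ⟨by rw [← hcard, ← him]; exact Finset.card_le_card hsub, fun heq g => ?_⟩
  have hsurj : P.image c = Finset.univ.erase (1 : G) :=
    Finset.eq_of_subset_of_card_le hsub (by rw [hcard, him, heq])
  have key : ∀ H ∈ P, ∀ x ∈ H, x ≠ 1 → x = c H := by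
    intro H hH x hx hx1
    have : x ∈ P.image c := by rw [hsurj]; simpa using hx1
    obtain ⟨K, hK, rfl⟩ := Finset.mem_image.1 this
    rw [hP.eq_of_mem hH hK hx1 hx (hc K hK).1]
  by_contra hg
  have hg1 : g ≠ 1 := by rintro rfl; simp at hg
  obtain ⟨H, hH, hgH⟩ := hP.1.2 g
  have := (key H hH _ (H.mul_mem hgH hgH) hg).trans (key H hH g hgH hg1).symm
  exact hg1 (by simpa using this)

/-- The subgroup `{1, a, b, ab}` of a group of exponent two. -/
def fourSubgroup {G : Type*} [Group G] (h2 : ∀ g : G, g * g = 1) (a b : G) : Subgroup G where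
  carrier := {1, a, b, a * b}
  one_mem' := by simp
  mul_mem' := by
    have hcomm : ∀ x y : G, x * y = y * x := fun x y =>
      Commute.of_orderOf_dvd_two (fun g => orderOf_dvd_of_pow_eq_one (by rw [pow_two, h2])) x y
    have hl : ∀ x y : G, x * (x * y) = y := fun x y => by rw [← mul_assoc, h2, one_mul]
    have hr : ∀ x y : G, x * (y * x) = y := fun x y => by rw [hcomm y x, hl]
    have hba := hcomm b a
    rintro x y (rfl | rfl | rfl | rfl) (rfl | rfl | rfl | rfl) <;>
      simp [h2, hl, hr, mul_assoc, hba]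
  inv_mem' := by
    intro x hx
    rwa [inv_eq_of_mul_eq_one_left (h2 x)]

open Classical in
/-- In a noncyclic group of exponent two and order greater than four, `{1, a, b, ab}` together with
the subgroups generated by the remaining elements is a partition with at most `|G| - 3` members. -/
lemma card_eq_four_of_rhoG_eq {G : Type*} [Group G] [Fintype G] (h2 : ∀ g : G, g * g = 1)
    (hG : ∀ g : G, Subgroup.zpowers g ≠ ⊤) {a b : G} (ha : a ≠ 1) (hb : b ≠ 1) (hab : b ≠ a)
    (hrho : rhoG G = Fintype.card G - 1) : Fintype.card G = 4 := by
  set S : Finset G := {1, a, b, a * b} with hS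
  have hS4 : S.card = 4 := by
    have h1 : a * b ≠ 1 := fun h => hab (mul_left_cancel (h.trans (h2 a).symm))
    have h3 : a ≠ a * b := fun h => hb (by simpa using h)
    have h4 : b ≠ a * b := fun h => ha (by simpa using h)
    rw [hS, Finset.card_insert_of_notMem (by simp [ha.symm, hb.symm, h1.symm]),
      Finset.card_insert_of_notMem (by simp [hab.symm, h3]), Finset.card_pair h4]
  have hmem : ∀ x, x ∈ fourSubgroup h2 a b ↔ x ∈ S := by
    intro x
    rw [← Subgroup.mem_carrier]
    simp [fourSubgroup, hS]
  by_contra hne4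
  have hH : fourSubgroup h2 a b ≠ ⊤ := by
    intro h
    apply hne4
    rw [← hS4, ← Finset.card_univ]
    congr 1
    ext x
    simp [← hmem, h]
  have hz : ∀ g x : G, x ∈ Subgroup.zpowers g → x = 1 ∨ x = g := by
    rintro g x ⟨n, rfl⟩
    rcases Int.even_or_odd' n with ⟨k, rfl | rfl⟩ <;>
      simp [zpow_add, zpow_mul, pow_two, h2]
  set Q : Finset (Subgroup G) := insert (fourSubgroup h2 a b) (Sᶜ.image Subgroup.zpowers)
  have hdisj : ∀ g, g ∉ S → fourSubgroup h2 a b ⊓ Subgroup.zpowers g = ⊥ := by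
    intro g hg
    rw [eq_bot_iff]
    rintro x ⟨hx, hxg⟩
    rcases hz g x hxg with rfl | rfl
    · exact Subgroup.one_mem _
    · exact absurd ((hmem _).1 hx) hg
  have hQ : IsPartitionOf Q := by
    refine ⟨⟨?_, fun g => ?_⟩, ?_⟩
    · intro K hK
      rcases Finset.mem_insert.1 hK with rfl | hK
      · exact hH
      · obtain ⟨g, -, rfl⟩ := Finset.mem_image.1 hK
        exact hG g
    · by_cases hg : g ∈ S
      · exact ⟨_, Finset.mem_insert_self _ _, (hmem g).2 hg⟩
      · exact ⟨_, Finset.mem_insert_of_mem (Finset.mem_image_of_mem _ (Finset.mem_compl.2 hg)),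
          Subgroup.mem_zpowers g⟩
    · intro K hK L hL hne
      rcases Finset.mem_insert.1 hK with rfl | hK <;> rcases Finset.mem_insert.1 hL with rfl | hL
      · exact absurd rfl hne
      · obtain ⟨g, hg, rfl⟩ := Finset.mem_image.1 hL
        exact hdisj g (Finset.mem_compl.1 hg)
      · obtain ⟨g, hg, rfl⟩ := Finset.mem_image.1 hK
        rw [inf_comm]
        exact hdisj g (Finset.mem_compl.1 hg)
      · obtain ⟨g, hg, rfl⟩ := Finset.mem_image.1 hK
        obtain ⟨k, hk, rfl⟩ := Finset.mem_image.1 hL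
        rw [eq_bot_iff]
        rintro x ⟨hx, hxk⟩
        rcases hz g x hx with rfl | rfl
        · exact Subgroup.one_mem _
        rcases hz k x hxk with rfl | rfl
        · exact Subgroup.one_mem _
        · exact absurd rfl hne
  have h1 := rhoG_le hQ
  have h3 : Q.card ≤ (Sᶜ).card + 1 :=
    (Finset.card_insert_le _ _).trans (Nat.add_le_add_right Finset.card_image_le 1)
  have h4 : S.card ≤ Fintype.card G := Finset.card_le_univ S
  rw [Finset.card_compl] at h3
  omega

open Classical in
/-- In a group of order four, a proper subgroup has at most one non-identity element, so a cover
has at least three members. -/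
lemma IsCover.three_le_card {G : Type*} [Group G] [Fintype G] (h4 : Fintype.card G = 4)
    {P : Finset (Subgroup G)} (hP : IsCover P) : 3 ≤ P.card := by
  choose f hfP hf using hP.2
  have h3 : (Finset.univ.erase (1 : G)).card = 3 := by
    rw [Finset.card_erase_of_mem (Finset.mem_univ _), Finset.card_univ, h4]
  rw [← h3]
  refine Finset.card_le_card_of_injOn f (fun g _ => hfP g) ?_
  intro x hx y hy hxy
  by_contra hne
  have hx1 : x ≠ 1 := by simpa using hx
  have hy1 : y ≠ 1 := by simpa using hy
  refine hP.1 _ (hfP x) (Subgroup.eq_top_of_card_eq _ ?_)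
  have hdvd : Nat.card (f x) ∣ 4 := by
    rw [← h4, ← Nat.card_eq_fintype_card]; exact Subgroup.card_subgroup_dvd_card _
  have hle : 3 ≤ Nat.card (f x) := by
    have hc : ({1, x, y} : Finset G).card = 3 :=
      Finset.card_eq_three.2 ⟨1, x, y, hx1.symm, hy1.symm, hne, rfl⟩
    rw [← hc, ← SetLike.coe_sort_coe, Nat.card_coe_set_eq, ← Set.ncard_coe_finset]
    refine Set.ncard_le_ncard ?_ (Set.toFinite _)
    intro z hz
    simp only [Finset.coe_insert, Finset.coe_singleton, Set.mem_insert_iff,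
      Set.mem_singleton_iff] at hz
    rcases hz with rfl | rfl | rfl
    · exact (f x).one_mem
    · exact hf _
    · exact hxy ▸ hf z
  rw [Nat.card_eq_fintype_card (α := G), h4]
  have := Nat.le_of_dvd (by norm_num) hdvd
  interval_cases h : Nat.card (f x) <;> omega

theorem rho_le_card_sub_one (G : Type*) [Group G] [Finite G] (h : Partitionable G) :
    rhoG G ≤ Nat.card G - 1 ∧
      (rhoG G = Nat.card G - 1 ↔
        Nonempty (G ≃* Multiplicative (ZMod 2 × ZMod 2))) := by 
  classical
  have := Fintype.ofFinite G
  obtain ⟨P, hP⟩ := h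
  have hQ := hP.erase_bot
  have hQc := hQ.card_le (Finset.notMem_erase _ _)
  have hle := rhoG_le hQ
  rw [Nat.card_eq_fintype_card]
  refine ⟨hle.trans hQc.1, fun heq => ?_, fun ⟨e⟩ => ?_⟩
  · have h2 := hQc.2 (le_antisymm hQc.1 (heq ▸ hle))
    obtain ⟨a, ha⟩ := hP.1.exists_ne_one
    obtain ⟨b, hb⟩ : ∃ b, b ∉ Subgroup.zpowers a := by
      by_contra! hall
      exact hP.1.zpowers_ne_top a (Subgroup.eq_top_iff' _ |>.2 hall)
    have hb1 : b ≠ 1 := by rintro rfl; exact hb (Subgroup.one_mem _)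
    have hba : b ≠ a := by rintro rfl; exact hb (Subgroup.mem_zpowers _)
    have h4 := card_eq_four_of_rhoG_eq h2 hP.1.zpowers_ne_top ha hb1 hba heq
    have : Nontrivial G := ⟨a, 1, ha⟩
    have : IsKleinFour G :=
      { card_four := by rw [Nat.card_eq_fintype_card, h4]
        exponent_two := by
          refine (Nat.prime_two.eq_one_or_self_of_dvd _
            (Monoid.exponent_dvd_of_forall_pow_eq_one fun g => by rw [pow_two, h2])).resolve_left ?_
          rw [Monoid.exp_eq_one_iff]
          exact not_subsingleton G }
    exact IsKleinFour.nonempty_mulEquiv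
  · have h4 : Fintype.card G = 4 := by
      rw [← Nat.card_eq_fintype_card, Nat.card_congr e.toEquiv]
      simp
    obtain ⟨R, hR, hRc⟩ := Nat.sInf_mem (s := {n | ∃ P : Finset (Subgroup G),
      IsPartitionOf P ∧ P.card = n}) ⟨_, P, hP, rfl⟩
    have h3 := hR.1.three_le_card h4
    change R.card = rhoG G at hRc
    have := hle.trans hQc.1
    omega
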